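/- Let ψ : E → F be a Borel measurable map between Polish spaces, let μ be a Borel probability measure on E, and let ν' be a Borel probability measure on F that is absolutely continuous with respect to the pushforward ψ_*μ, with density f = dν'/d(ψ_*μ). Then the measure ν on E defined by dν := (f ∘ ψ) dμ is a Borel probability measure, its pushforward satisfies ψ_*ν = ν', and the relative entropies coincide: H(ν|μ) = H(ν'|ψ_*μ). -/

import Mathlib

/-! Write `f` for the density of `ν'` with respect to `ψ_*μ`, and `ν` for `(f ∘ ψ) · μ`. The whole
argument is the change of variables formula. For a Borel set `s` of `F`,
`ν (ψ ⁻¹' s) = ∫⁻ x in ψ ⁻¹' s, f (ψ x) ∂μ = ∫⁻ y in s, f y ∂(ψ_*μ) = ν' s`, so `ψ_*ν = ν'`; in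
particular `ν` has total mass one. By construction `f ∘ ψ` is a version of the density of `ν` with
respect to `μ`, so the log-likelihood ratio of `(ν, μ)` is `ν`-almost everywhere the one of
`(ν', ψ_*μ)` composed with `ψ`. Integrability and integrals of a function on `F` against
`ν' = ψ_*ν` are those of its composition with `ψ` against `ν`, which gives equality of entropies. -/

open MeasureTheory
open scoped ENNReal

/-- The squared (second-order) Wasserstein distance: infimum over all couplings `π` of
`(ν, μ)` of `∫ d(x,y)² dπ`. -/
noncomputable def W2sq {E : Type*} [MeasurableSpace E] [PseudoMetricSpace E]
    (ν μ : Measure E) : ℝ≥0∞ :=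
  ⨅ (π : Measure (E × E)) (_ : π.map Prod.fst = ν) (_ : π.map Prod.snd = μ),
    ∫⁻ p, ENNReal.ofReal (dist p.1 p.2 ^ 2) ∂π

open Classical in
/-- Relative entropy (Kullback-Leibler divergence): `∫ (dν/dμ) log (dν/dμ) dμ` if `ν ≪ μ`
(where a non-integrable log-likelihood ratio yields `∞`), and `∞` otherwise. -/
noncomputable def relEntropy {E : Type*} [MeasurableSpace E] (ν μ : Measure E) : ℝ≥0∞ :=
  if ν ≪ μ ∧ Integrable (llr ν μ) ν then ENNReal.ofReal (∫ x, llr ν μ x ∂ν) else ∞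

/-- A probability measure `μ` satisfies Talagrand's quadratic transportation inequality
`T2(C)` if `W₂²(ν, μ) ≤ C · H(ν | μ)` for every Borel probability measure `ν`. -/
def SatisfiesT2 {E : Type*} [MeasurableSpace E] [PseudoMetricSpace E]
    (μ : Measure E) (C : ℝ) : Prop :=
  ∀ ν : Measure E, IsProbabilityMeasure ν → W2sq ν μ ≤ ENNReal.ofReal C * relEntropy ν μ

/-- For a Borel map `ψ : E → F` between Polish spaces, a Borel probability
measure `μ` on `E` and a Borel probability measure `ν'` on `F` with `ν' ≪ ψ_*μ` and density
`f = dν'/d(ψ_*μ)`, the measure `ν := (f ∘ ψ) · μ` is a probability measure, it pushes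
forward to `ν'`, and `H(ν | μ) = H(ν' | ψ_*μ)`. -/
theorem pullback_density_probability_map_relEntropy
    {E F : Type*}
    [TopologicalSpace E] [PolishSpace E] [MeasurableSpace E] [BorelSpace E]
    [TopologicalSpace F] [PolishSpace F] [MeasurableSpace F] [BorelSpace F]
    (ψ : E → F) (hψ : Measurable ψ)
    (μ : Measure E) [IsProbabilityMeasure μ]
    (ν' : Measure F) [IsProbabilityMeasure ν']
    (habs : ν' ≪ μ.map ψ) :
    IsProbabilityMeasure (μ.withDensity (fun x => ν'.rnDeriv (μ.map ψ) (ψ x))) ∧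
    (μ.withDensity (fun x => ν'.rnDeriv (μ.map ψ) (ψ x))).map ψ = ν' ∧
    relEntropy (μ.withDensity (fun x => ν'.rnDeriv (μ.map ψ) (ψ x))) μ
      = relEntropy ν' (μ.map ψ) := by
  set f := ν'.rnDeriv (μ.map ψ) with hf
  have hfm : Measurable f := Measure.measurable_rnDeriv _ _
  have hfψ : Measurable fun x => f (ψ x) := hfm.comp hψ
  have : IsProbabilityMeasure (μ.map ψ) := Measure.isProbabilityMeasure_map hψ.aemeasurable
  set ν := μ.withDensity (fun x => f (ψ x)) with hν
  have hmap : ν.map ψ = ν' := by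
    ext s hs
    rw [Measure.map_apply hψ hs, hν, withDensity_apply _ (hψ hs), ← setLIntegral_map hs hfm hψ,
      hf, Measure.setLIntegral_rnDeriv habs]
  have hprob : IsProbabilityMeasure ν := by
    refine ⟨?_⟩
    rw [← Set.preimage_univ (f := ψ), ← Measure.map_apply hψ .univ, hmap, measure_univ]
  have hac : ν ≪ μ := withDensity_absolutelyContinuous _ _
  have hllr : llr ν μ =ᵐ[ν] llr ν' (μ.map ψ) ∘ ψ := by
    have h : ν.rnDeriv μ =ᵐ[μ] fun x => f (ψ x) := Measure.rnDeriv_withDensity μ hfψ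
    filter_upwards [hac.ae_le h] with x hx
    simp [llr, hx, hf]
  have hmeas : Measurable (llr ν' (μ.map ψ)) := measurable_llr _ _
  have h_integrable : Integrable (llr ν μ) ν ↔ Integrable (llr ν' (μ.map ψ)) ν' := by
    rw [integrable_congr hllr, ← integrable_map_measure hmeas.aestronglyMeasurable hψ.aemeasurable,
      hmap]
  have hval : ∫ x, llr ν μ x ∂ν = ∫ y, llr ν' (μ.map ψ) y ∂ν' := by
    have h := integral_map (μ := ν) hψ.aemeasurable hmeas.aestronglyMeasurable
    rw [hmap] at h
    rw [integral_congr_ae hllr, h]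
    rfl
  refine ⟨hprob, hmap, ?_⟩
  unfold relEntropy
  rw [hval]
  classical exact if_congr (and_congr (iff_of_true hac habs) h_integrable) rfl rfl
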